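/- Let q = 2^h with h ≥ 4. Let {α₁, α₂, α₃} and {α'₁, α'₂, α'₃} be two F_2-independent subsets of F_q \ {0} with the same F_2-span, ⟨α₁,α₂,α₃⟩ = ⟨α'₁,α'₂,α'₃⟩. Let A be a point set produced by the q/8-construction from (α₁,α₂,α₃) (with some admissible choice of β₁,β₂,β₃) and let A' be one produced from (α'₁,α'₂,α'₃) (with some admissible choice of β'₁,β'₂,β'₃). Then A and A' are PGL-equivalent: there exists M ∈ GL(3,q) whose induced projectivity of PG(2,q) (sending the point spanned by v ∈ F_q³ to the point spanned by M·v) maps A onto A'. -/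

import Mathlib

open scoped Classical

noncomputable section

variable {K : Type*} [Field K]

/-- The absolute trace-style sum `x + x² + x⁴ + ⋯ + x^(2^(h-1))`
(it lands in the prime subfield `F₂` when `|K| = 2^h`). -/
def Tr (h : ℕ) (x : K) : K := ∑ i ∈ Finset.range h, x ^ 2 ^ i

/-- `F₂`-independence of a tuple of elements of a field of characteristic two:
no nontrivial combination with coefficients `0`/`1` vanishes. -/
def F2Indep {n : ℕ} (v : Fin n → K) : Prop :=
  ∀ c : Fin n → K, (∀ i, c i = 0 ∨ c i = 1) → ∑ i, c i * v i = 0 → ∀ i, c i = 0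

/-- The `F₂`-span of a tuple of elements of a field of characteristic two. -/
def F2Span {n : ℕ} (v : Fin n → K) : Set K :=
  {x | ∃ c : Fin n → K, (∀ i, c i = 0 ∨ c i = 1) ∧ x = ∑ i, c i * v i}

/-- `α·S` for an additive subgroup `S` of the field. -/
def smulSub (α : K) (S : AddSubgroup K) : AddSubgroup K :=
  S.map (AddMonoidHom.mulLeft α)

/-- Points of `PG(2,q)`: one-dimensional subspaces of `K³`. -/
abbrev Pt (K : Type*) [Field K] := Projectivization K (Fin 3 → K)

/-- The point `(a : b : c)` of `PG(2,q)`. -/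
def pt3 (a b c : K) (habc : ¬(a = 0 ∧ b = 0 ∧ c = 0)) : Pt K :=
  Projectivization.mk K ![a, b, c] (fun h0 => habc
    ⟨by simpa using congrFun h0 0, by simpa using congrFun h0 1, by simpa using congrFun h0 2⟩)

/-- The point `(a : b)` of `PG(1,q)`. -/
def pt2 (a b : K) (hab : ¬(a = 0 ∧ b = 0)) : Projectivization K (Fin 2 → K) :=
  Projectivization.mk K ![a, b] (fun h0 => hab
    ⟨by simpa using congrFun h0 0, by simpa using congrFun h0 1⟩)

/-- An `F₂`-linear set of points of `PG(1,q)`: in characteristic two, the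
`F₂`-subspaces of `K²` are exactly its additive subgroups. -/
def IsF2Linear (T : Set (Projectivization K (Fin 2 → K))) : Prop :=
  ∃ U : AddSubgroup (Fin 2 → K),
    T = {P | ∃ u : Fin 2 → K, ∃ hu : u ≠ 0, u ∈ U ∧ Projectivization.mk K u hu = P}

/-- Lines of `PG(2,q)`: two-dimensional subspaces of `K³`. -/
def IsLine (L : Submodule K (Fin 3 → K)) : Prop := Module.finrank K L = 2

/-- Incidence of a point with a line. -/
def OnLine (P : Pt K) (L : Submodule K (Fin 3 → K)) : Prop := P.submodule ≤ L

/-- The number of points of `A` lying on the line `L`. -/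
def secantCount (A : Set (Pt K)) (L : Submodule K (Fin 3 → K)) : ℕ :=
  {P ∈ A | OnLine P L}.ncard

/-- A KM-arc of type `t`: `q+t` points meeting every line in `0`, `2` or `t` points. -/
def IsKMArc (q t : ℕ) (A : Set (Pt K)) : Prop :=
  A.ncard = q + t ∧ ∀ L : Submodule K (Fin 3 → K), IsLine L →
    secantCount A L = 0 ∨ secantCount A L = 2 ∨ secantCount A L = t

/-- The projectivity of `PG(2,q)` induced by an element of `GL(3,q)`. -/
def projMap (f : (Fin 3 → K) ≃ₗ[K] (Fin 3 → K)) : Pt K → Pt K :=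
  Projectivization.map f.toLinearMap f.injective

/-- `f` induces an elation with axis `L` and centre `R`: it fixes every point of `L`
and maps every line through `R` to itself. -/
def IsElation (f : (Fin 3 → K) ≃ₗ[K] (Fin 3 → K)) (L : Submodule K (Fin 3 → K))
    (R : Pt K) : Prop :=
  IsLine L ∧ OnLine R L ∧ (∀ P : Pt K, OnLine P L → projMap f P = P) ∧
    ∀ M : Submodule K (Fin 3 → K), IsLine M → OnLine R M →
      ∀ P : Pt K, OnLine P M → OnLine (projMap f P) M

/-- `f` induces an elation with axis `L` (for some centre on `L`). -/
def IsElationAxis (f : (Fin 3 → K) ≃ₗ[K] (Fin 3 → K)) (L : Submodule K (Fin 3 → K)) : Prop :=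
  ∃ R : Pt K, IsElation f L R

/-- The projectivity induced by `f` stabilises the point set `A`. -/
def Stabilises (f : (Fin 3 → K) ≃ₗ[K] (Fin 3 → K)) (A : Set (Pt K)) : Prop :=
  projMap f '' A = A

/-- `N` lies on every `t`-secant of `A` (i.e. `N` is the `t`-nucleus). -/
def IsNucleus (t : ℕ) (A : Set (Pt K)) (N : Pt K) : Prop :=
  ∀ L : Submodule K (Fin 3 → K), IsLine L → secantCount A L = t → OnLine N L

/-- An elation KM-arc of type `t` with `t`-nucleus `N` and elation line `linf`:
for every `t`-secant `L ≠ linf`, the group of elations with axis `linf` stabilising `A`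
acts transitively on `A ∩ L`. -/
def IsElationKMArc (q t : ℕ) (A : Set (Pt K)) (N : Pt K)
    (linf : Submodule K (Fin 3 → K)) : Prop :=
  IsKMArc q t A ∧ IsLine linf ∧ OnLine N linf ∧ IsNucleus t A N ∧
    ∀ L : Submodule K (Fin 3 → K), IsLine L → secantCount A L = t → L ≠ linf →
      ∀ P ∈ A, OnLine P L → ∀ Q ∈ A, OnLine Q L →
        ∃ f : (Fin 3 → K) ≃ₗ[K] (Fin 3 → K),
          IsElationAxis f linf ∧ Stabilises f A ∧ projMap f P = Q

/-- A translation KM-arc with translation line `l`: the group of elations with axis `l`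
stabilising `A` acts transitively on `A \ l`. -/
def IsTranslationKMArc (A : Set (Pt K)) (l : Submodule K (Fin 3 → K)) : Prop :=
  IsLine l ∧ ∀ P ∈ A, ¬OnLine P l → ∀ Q ∈ A, ¬OnLine Q l →
    ∃ f : (Fin 3 → K) ≃ₗ[K] (Fin 3 → K),
      IsElationAxis f l ∧ Stabilises f A ∧ projMap f P = Q

/-- The line `X = 0` of `PG(2,q)`. -/
def lineX0 (K : Type*) [Field K] : Submodule K (Fin 3 → K) :=
  LinearMap.ker (LinearMap.proj (R := K) (φ := fun _ : Fin 3 => K) 0)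

/-- The line `Y = aX` of `PG(2,q)`. -/
def lineYaX (a : K) : Submodule K (Fin 3 → K) where
  carrier := {v | v 1 = a * v 0}
  add_mem' := by
    intro v w hv hw
    simp only [Set.mem_setOf_eq, Pi.add_apply] at hv hw ⊢
    rw [hv, hw]; ring
  zero_mem' := by simp
  smul_mem' := by
    intro c v hv
    simp only [Set.mem_setOf_eq, Pi.smul_apply, smul_eq_mul] at hv ⊢
    rw [hv]; ring

/-- The point set of the `q/8`-construction (Theorem 4.4 of the paper), built from
`F₂`-independent `a 0, a 1, a 2` and coset representatives `b 0, b 1, b 2`. -/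
def q8Arc (h : ℕ) (a b : Fin 3 → K) : Set (Pt K) :=
  {P | ∃ x : K, (∀ i, Tr h (a i ^ 2 * x) = 0) ∧ P = pt3 0 1 x (by simp)}
    ∪ {P | ∃ l : Fin 3 → K, (∀ i, l i = 0 ∨ l i = 1) ∧ ∃ s : K, (∀ i, Tr h (a i * s) = 0) ∧
        P = pt3 1 (l 0 * a 0 + l 1 * a 1 + l 2 * a 2)
          ((l 0 + l 1 + l 2 + l 1 * l 2) * b 0 + (l 1 + l 2 + l 0 * l 2) * b 1
            + (l 2 + l 0 * l 1) * b 2 + s) (by simp)}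

/-- The point set of the `q/16`-construction (Theorem 5.2 of the paper). -/
def q16Arc (h : ℕ) (a : Fin 4 → K) (α : K) (b : Fin 3 → K) : Set (Pt K) :=
  {P | ∃ x : K, Tr h (a 0 * (a 0 + a 3) * x) = 0 ∧ Tr h (a 1 * (a 1 + a 3) * x) = 0 ∧
      Tr h (a 2 * (a 2 + a 3) * x) = 0 ∧ Tr h (a 3 * α * x) = 1 ∧ P = pt3 0 1 x (by simp)}
    ∪ {P | ∃ l : Fin 4 → K, (∀ i, l i = 0 ∨ l i = 1) ∧ ∃ s : K, (∀ i, Tr h (a i * s) = 0) ∧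
        P = pt3 1 (l 0 * a 0 + l 1 * a 1 + l 2 * a 2 + l 3 * a 3)
          ((l 0 + l 1 + l 2 + l 1 * l 2) * b 0 + (l 1 + l 2 + l 0 * l 2) * b 1
            + (l 2 + l 0 * l 1) * b 2 + s) (by simp)}

/-- The semilinear collineation of `PG(2,q)` sending the point spanned by `v`
to the point spanned by `M (ψ ∘ v)`. -/
def frobMap (ψ : K ≃+* K) (M : (Fin 3 → K) ≃ₗ[K] (Fin 3 → K)) (P : Pt K) : Pt K :=
  Projectivization.mk K (M fun i => ψ (P.rep i)) (by
    rw [LinearEquiv.map_ne_zero_iff]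
    intro h0
    apply P.rep_nonzero
    funext i
    have h2 : P.rep i = 0 := ψ.injective (by rw [map_zero]; exact congrFun h0 i)
    simpa using h2)

/-!
Write an affine point of the arc as `(1 : Σ lᵢaᵢ : z)` with `l ∈ F₂³`. By duality of `a` and `b`,
the condition on `z` is `Tr(aᵢz) = f(l)ᵢ`, where `f` is the quadratic map of the construction. If
`a' = G a` with `G` invertible over `F₂`, the same arc is described in terms of `a'` by the map
`l ↦ G f(l G)` in place of `f`. So it suffices to see that this map and `f` differ only by
translations of source and target, because such translations are induced by elations with axis
`X = 0`.

Two identities give this. The polarization of `f` is the cross product,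
`f(u + v) = f(u) + f(v) + u × v`, and `G ((u G) × (v G)) = det G • (u × v)` with `det G = 1`; hence
`D(u) = G f(u G) - f(u)` is additive. Moreover `u · f(u)` is `1` for every `u ≠ 0`, hence
`u · D(u) = 0`. An alternating map in dimension three is a cross product `u ↦ u × d`, so
`G f(u G) = f(u) + u × d = f(u + d) - f(d)`.
-/

section QuadraticMap

open Matrix

variable {R : Type*} [CommRing R]

/-- The quadratic map `f = (f₁, f₂, f₃)` of the `q/8`-construction. -/
def q8Quad (u : Fin 3 → R) : Fin 3 → R :=
  ![u 0 + u 1 + u 2 + u 1 * u 2, u 1 + u 2 + u 0 * u 2, u 2 + u 0 * u 1]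

theorem q8Quad_add [CharP R 2] (u v : Fin 3 → R) :
    q8Quad (u + v) = q8Quad u + q8Quad v + u ⨯₃ v := by
  ext i
  fin_cases i <;> simp [q8Quad, cross_apply, CharTwo.sub_eq_add] <;> ring

theorem dotProduct_q8Quad_self (u : Fin 3 → ZMod 2) :
    u ⬝ᵥ q8Quad u = if u = 0 then 0 else 1 := by
  revert u
  decide

theorem mulVec_crossProduct_vecMul (G : Matrix (Fin 3) (Fin 3) R) (u v : Fin 3 → R) :
    G *ᵥ ((u ᵥ* G) ⨯₃ (v ᵥ* G)) = G.det • (u ⨯₃ v) := by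
  ext i
  fin_cases i <;>
    simp [cross_apply, Matrix.det_fin_three, Matrix.mulVec, Matrix.vecMul, dotProduct,
      Fin.sum_univ_three] <;> ring

theorem exists_eq_crossProduct_of_dotProduct_self_eq_zero (D : (Fin 3 → R) →ₗ[R] (Fin 3 → R))
    (hD : ∀ u, u ⬝ᵥ D u = 0) : ∃ d, ∀ u, D u = u ⨯₃ d := by
  have diag (i : Fin 3) : D (Pi.single i 1) i = 0 := by simpa using hD (Pi.single i 1)
  have skew (i j : Fin 3) : D (Pi.single i 1) j = -D (Pi.single j 1) i := by
    have polarization := hD (Pi.single i 1 + Pi.single j 1)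
    rw [map_add, add_dotProduct, dotProduct_add, dotProduct_add] at polarization
    simp only [hD, zero_add, add_zero, single_one_dotProduct] at polarization
    exact eq_neg_of_add_eq_zero_right polarization
  let d : Fin 3 → R := ![D (Pi.single 2 1) 1, D (Pi.single 0 1) 2, D (Pi.single 1 1) 0]
  suffices h : D = crossProduct.flip d from ⟨d, fun u => by rw [h, LinearMap.flip_apply]⟩
  refine (Pi.basisFun R (Fin 3)).ext fun i => funext fun j => ?_
  rw [Pi.basisFun_apply, LinearMap.flip_apply, cross_apply]
  fin_cases i <;> fin_cases j <;> simp [d, diag, skew 0 1, skew 1 2, skew 2 0]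

theorem exists_mulVec_q8Quad_vecMul_eq (G : Matrix (Fin 3) (Fin 3) (ZMod 2)) (hG : G.det = 1) :
    ∃ d, ∀ u, G *ᵥ q8Quad (u ᵥ* G) = q8Quad (u + d) - q8Quad d := by
  have vecMul_eq_zero (u : Fin 3 → ZMod 2) : u ᵥ* G = 0 ↔ u = 0 :=
    ⟨Matrix.eq_zero_of_vecMul_eq_zero (by simp [hG]), fun h => by simp [h]⟩
  let D : (Fin 3 → ZMod 2) →+ (Fin 3 → ZMod 2) :=
    AddMonoidHom.mk' (fun u => G *ᵥ q8Quad (u ᵥ* G) - q8Quad u) fun u v => by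
      simp only [Matrix.add_vecMul, q8Quad_add, Matrix.mulVec_add, mulVec_crossProduct_vecMul, hG,
        one_smul]
      abel
  have alternating (u : Fin 3 → ZMod 2) : u ⬝ᵥ D u = 0 := by
    simp [D, dotProduct_sub, Matrix.dotProduct_mulVec, dotProduct_q8Quad_self, vecMul_eq_zero]
  obtain ⟨d, hd⟩ :=
    exists_eq_crossProduct_of_dotProduct_self_eq_zero (D.toZModLinearMap 2) alternating
  refine ⟨d, fun u => ?_⟩
  calc G *ᵥ q8Quad (u ᵥ* G) = D u + q8Quad u := by simp [D]
    _ = u ⨯₃ d + q8Quad u := by rw [← hd u, AddMonoidHom.coe_toZModLinearMap]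
    _ = q8Quad (u + d) - q8Quad d := by rw [q8Quad_add]; abel

end QuadraticMap

section LinearCombination

open Matrix
open Fintype (linearCombination)

variable {R M A ι : Type*} [CommRing R] [AddCommGroup M] [Module R M] [CommRing A] [Algebra R A]

theorem linearIndependent_of_dual [DecidableEq ι] [FaithfulSMul R A] {τ : A →ₗ[R] A} {a b : ι → A}
    (hab : ∀ i j, τ (a i * b j) = if i = j then 1 else 0) : LinearIndependent R a := by
  rw [linearIndependent_iff']
  intro s l hl j hj
  have coordinate : τ ((∑ i ∈ s, l i • a i) * b j) = algebraMap R A (l j) := by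
    simp only [Finset.sum_mul, smul_mul_assoc, map_sum, map_smul, hab]
    simp [hj, Algebra.smul_def]
  simpa [hl] using coordinate.symm

variable [Fintype ι]

theorem linearCombination_vecMul {a a' : ι → M} {G : Matrix ι ι R}
    (hG : ∀ i, a' i = linearCombination R a (G i)) (l : ι → R) :
    linearCombination R a (l ᵥ* G) = linearCombination R a' l := by
  rw [Matrix.vecMul_eq_sum, map_sum, Fintype.linearCombination_apply]
  simp only [map_smul, hG]

theorem exists_matrix_of_forall_mem_span {a a' : ι → M}
    (h : ∀ i, a' i ∈ Submodule.span R (Set.range a)) :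
    ∃ G : Matrix ι ι R, ∀ i, a' i = linearCombination R a (G i) := by
  simp only [Submodule.mem_span_range_iff_exists_fun] at h
  choose G hG using h
  exact ⟨G, fun i => (hG i).symm⟩

theorem matrix_mul_eq_one_of_linearIndependent [DecidableEq ι] {a a' : ι → M}
    (ha' : LinearIndependent R a') {G H : Matrix ι ι R}
    (hG : ∀ i, a' i = linearCombination R a (G i))
    (hH : ∀ i, a i = linearCombination R a' (H i)) : G * H = 1 := by
  refine Matrix.ext_row fun i => ha'.fintypeLinearCombination_injective ?_
  calc linearCombination R a' ((G * H) i) = linearCombination R a (G i) :=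
        linearCombination_vecMul hH (G i)
    _ = a' i := (hG i).symm
    _ = linearCombination R a' ((1 : Matrix ι ι R) i) := by
        simp [Fintype.linearCombination_apply, Matrix.one_apply]

theorem map_linearCombination_mul (τ : A →ₗ[R] M) (a : ι → A) (l : ι → R) (z : A) :
    τ (linearCombination R a l * z) = linearCombination R (fun i => τ (a i * z)) l := by
  simp only [Fintype.linearCombination_apply, Finset.sum_mul, smul_mul_assoc, map_sum, map_smul]

theorem linearCombination_algebraMap (l w : ι → R) :
    linearCombination R (fun i => algebraMap R A (w i)) l = algebraMap R A (l ⬝ᵥ w) := by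
  simp [Fintype.linearCombination_apply, dotProduct, Algebra.smul_def]

theorem linearCombination_pow_char (p : ℕ) [Fact p.Prime] [CharP A p] [Algebra (ZMod p) A]
    (a : ι → A) (l : ι → ZMod p) :
    linearCombination (ZMod p) a l ^ p = linearCombination (ZMod p) (fun i => a i ^ p) l := by
  simp only [Fintype.linearCombination_apply, sum_pow_char, smul_pow, ZMod.pow_card]

theorem map_mul_linearCombination_of_dual [DecidableEq ι] {τ : A →ₗ[R] A} {a b : ι → A}
    (hab : ∀ i j, τ (a i * b j) = if i = j then 1 else 0) (w : ι → R) (i : ι) :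
    τ (a i * linearCombination R b w) = algebraMap R A (w i) := by
  rw [mul_comm, map_linearCombination_mul]
  simp [mul_comm (b _), hab, Fintype.linearCombination_apply, Algebra.smul_def]

end LinearCombination

section Shear

/-- The affine translation `(1 : x : z) ↦ (1 : x + c : z + e)`, as a linear map of `K³`. -/
def shear (c e : K) : (Fin 3 → K) ≃ₗ[K] (Fin 3 → K) :=
  LinearEquiv.transvection (f := LinearMap.proj 0) (v := ![0, c, e]) (by simp)

theorem projMap_shear_pt3 (c e x y z : K) (hp : ¬(x = 0 ∧ y = 0 ∧ z = 0))
    (hp' : ¬(x = 0 ∧ y + x * c = 0 ∧ z + x * e = 0)) :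
    projMap (shear c e) (pt3 x y z hp) = pt3 x (y + x * c) (z + x * e) hp' := by
  unfold projMap pt3
  rw [Projectivization.map_mk]
  congr 1
  ext i
  fin_cases i <;> simp [shear, LinearEquiv.transvection, LinearMap.transvection.apply]

end Shear

section PrimeField

variable [Algebra (ZMod 2) K]

theorem charP_two_of_algebra (K : Type*) [Field K] [Algebra (ZMod 2) K] : CharP K 2 :=
  charP_of_injective_algebraMap (algebraMap (ZMod 2) K).injective 2

theorem forall_eq_zero_or_one_iff {ι : Type*} (c : ι → K) :
    (∀ i, c i = 0 ∨ c i = 1) ↔ ∃ l : ι → ZMod 2, algebraMap (ZMod 2) K ∘ l = c := by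
  have mem_primeField (x : K) : (x = 0 ∨ x = 1) ↔ ∃ t : ZMod 2, algebraMap (ZMod 2) K t = x := by
    constructor
    · rintro (rfl | rfl)
      exacts [⟨0, map_zero _⟩, ⟨1, map_one _⟩]
    · rintro ⟨t, rfl⟩
      obtain rfl | rfl : t = 0 ∨ t = 1 := by decide +revert
      all_goals simp
  simp only [mem_primeField, Classical.skolem, funext_iff, Function.comp_apply]

theorem F2Span_eq_span {n : ℕ} (v : Fin n → K) :
    F2Span v = Submodule.span (ZMod 2) (Set.range v) := by
  ext x
  simp only [F2Span, forall_eq_zero_or_one_iff, Set.mem_ofPred_eq, SetLike.mem_coe,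
    Submodule.mem_span_range_iff_exists_fun]
  constructor
  · rintro ⟨_, ⟨l, rfl⟩, rfl⟩
    exact ⟨l, by simp [Algebra.smul_def]⟩
  · rintro ⟨l, rfl⟩
    exact ⟨_, ⟨l, rfl⟩, by simp [Algebra.smul_def]⟩

/-- `Tr h` as a linear map over the prime field. -/
def trLinear (K : Type*) [Field K] [Algebra (ZMod 2) K] (h : ℕ) : K →ₗ[ZMod 2] K :=
  AddMonoidHom.toZModLinearMap 2 <| AddMonoidHom.mk' (Tr h) fun x y => by
    have := charP_two_of_algebra K
    simp only [Tr, add_pow_char_pow, Finset.sum_add_distrib]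

theorem trLinear_apply (h : ℕ) (x : K) : trLinear K h x = Tr h x := rfl

end PrimeField

section TraceArc

open Matrix
open Fintype (linearCombination)

variable [Algebra (ZMod 2) K] {ι : Type*} [Fintype ι] (τ : K →ₗ[ZMod 2] K)

/-- The point set whose affine points are the `(1 : Σ lᵢaᵢ : z)` with `τ(aᵢz) = F(l)ᵢ`: the arc of
the `q/8`-construction with the elements `βᵢ` eliminated, for an arbitrary `F` in place of `f` and
an arbitrary `τ` in place of the trace. -/
def traceArc (a : ι → K) (F : (ι → ZMod 2) → ι → ZMod 2) : Set (Pt K) :=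
  {P | ∃ x, (∀ i, τ (a i ^ 2 * x) = 0) ∧ P = pt3 0 1 x (by simp)}
    ∪ {P | ∃ l z, (∀ i, τ (a i * z) = algebraMap (ZMod 2) K (F l i)) ∧
        P = pt3 1 (linearCombination (ZMod 2) a l) z (by simp)}

theorem traceArc_subset_of_matrix [DecidableEq ι] {a a' : ι → K} {G H : Matrix ι ι (ZMod 2)}
    (hHG : H * G = 1) (hG : ∀ i, a' i = linearCombination (ZMod 2) a (G i))
    (F : (ι → ZMod 2) → ι → ZMod 2) :
    traceArc τ a F ⊆ traceArc τ a' fun l => G *ᵥ F (l ᵥ* G) := by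
  have := charP_two_of_algebra K
  rintro P (⟨x, hx, rfl⟩ | ⟨l, z, hz, rfl⟩)
  · refine .inl ⟨x, fun i => ?_, rfl⟩
    rw [hG, linearCombination_pow_char, map_linearCombination_mul]
    simp [hx, Fintype.linearCombination_apply]
  · have vecMul_cancel : (l ᵥ* H) ᵥ* G = l := by rw [Matrix.vecMul_vecMul, hHG, Matrix.vecMul_one]
    refine .inr ⟨l ᵥ* H, z, fun i => ?_, ?_⟩
    · calc τ (a' i * z) = algebraMap (ZMod 2) K ((G *ᵥ F l) i) := by
            simp only [hG, map_linearCombination_mul, hz, linearCombination_algebraMap,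
              Matrix.mulVec]
        _ = algebraMap (ZMod 2) K ((G *ᵥ F ((l ᵥ* H) ᵥ* G)) i) := by rw [vecMul_cancel]
    · simp only [← linearCombination_vecMul hG, vecMul_cancel]

theorem traceArc_eq_of_matrix [DecidableEq ι] {a a' : ι → K} {G H : Matrix ι ι (ZMod 2)}
    (hHG : H * G = 1) (hG : ∀ i, a' i = linearCombination (ZMod 2) a (G i))
    (hH : ∀ i, a i = linearCombination (ZMod 2) a' (H i)) (F : (ι → ZMod 2) → ι → ZMod 2) :
    traceArc τ a F = traceArc τ a' fun l => G *ᵥ F (l ᵥ* G) := by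
  refine (traceArc_subset_of_matrix τ hHG hG F).antisymm ?_
  have hGH : G * H = 1 := mul_eq_one_comm.mp hHG
  simpa only [Matrix.mulVec_mulVec, Matrix.vecMul_vecMul, hHG, Matrix.one_mulVec,
    Matrix.vecMul_one] using traceArc_subset_of_matrix τ hGH hH fun l => G *ᵥ F (l ᵥ* G)

theorem image_shear_traceArc (a : ι → K) (F : (ι → ZMod 2) → ι → ZMod 2) (d w : ι → ZMod 2) (e : K)
    (he : ∀ i, τ (a i * e) = algebraMap (ZMod 2) K (w i)) :
    projMap (shear (linearCombination (ZMod 2) a d) e) '' traceArc τ a F =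
      traceArc τ a fun l => F (l - d) + w := by
  unfold traceArc
  rw [Set.image_union]
  congr 1 <;> ext P
  · constructor
    · rintro ⟨_, ⟨x, hx, rfl⟩, rfl⟩
      exact ⟨x, hx, by rw [projMap_shear_pt3 (hp' := by simp)]; simp⟩
    · rintro ⟨x, hx, rfl⟩
      exact ⟨_, ⟨x, hx, rfl⟩, by rw [projMap_shear_pt3 (hp' := by simp)]; simp⟩
  · constructor
    · rintro ⟨_, ⟨l, z, hz, rfl⟩, rfl⟩
      refine ⟨l + d, z + e, fun i => ?_, ?_⟩
      · simp [mul_add, hz, he]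
      · rw [projMap_shear_pt3 (hp' := by simp)]
        simp
    · rintro ⟨l, z, hz, rfl⟩
      refine ⟨_, ⟨l - d, z - e, fun i => ?_, rfl⟩, ?_⟩
      · simp [mul_sub, hz, he]
      · rw [projMap_shear_pt3 (hp' := by simp)]
        simp

theorem q8Arc_eq_traceArc {h : ℕ} {a b : Fin 3 → K}
    (hab : ∀ i j, Tr h (a i * b j) = if i = j then 1 else 0) :
    q8Arc h a b = traceArc (trLinear K h) a q8Quad := by
  let φ := algebraMap (ZMod 2) K
  have abscissa (l : Fin 3 → ZMod 2) :
      φ (l 0) * a 0 + φ (l 1) * a 1 + φ (l 2) * a 2 = linearCombination (ZMod 2) a l := by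
    simp [φ, Fintype.linearCombination_apply, Fin.sum_univ_three, Algebra.smul_def]
  have ordinate (l : Fin 3 → ZMod 2) :
      (φ (l 0) + φ (l 1) + φ (l 2) + φ (l 1) * φ (l 2)) * b 0
        + (φ (l 1) + φ (l 2) + φ (l 0) * φ (l 2)) * b 1
        + (φ (l 2) + φ (l 0) * φ (l 1)) * b 2 = linearCombination (ZMod 2) b (q8Quad l) := by
    simp [φ, q8Quad, Fintype.linearCombination_apply, Fin.sum_univ_three, Algebra.smul_def]
  simp only [← trLinear_apply] at hab
  have tr_ordinate := map_mul_linearCombination_of_dual hab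
  unfold q8Arc traceArc
  congr 1
  ext P
  simp only [forall_eq_zero_or_one_iff, ← trLinear_apply, Set.mem_ofPred_eq]
  constructor
  · rintro ⟨_, ⟨l, rfl⟩, s, hs, rfl⟩
    refine ⟨l, linearCombination (ZMod 2) b (q8Quad l) + s, fun i => ?_, ?_⟩
    · rw [mul_add, map_add, tr_ordinate, hs, add_zero]
    · simp only [Function.comp_apply, ← abscissa, ← ordinate, φ]
  · rintro ⟨l, z, hz, rfl⟩
    refine ⟨φ ∘ l, ⟨l, rfl⟩, z - linearCombination (ZMod 2) b (q8Quad l), fun i => ?_, ?_⟩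
    · rw [mul_sub, map_sub, tr_ordinate, hz, sub_self]
    · simp only [Function.comp_apply, abscissa, ordinate, add_sub_cancel]

end TraceArc

theorem q8_pgl_equiv_general {K : Type*} [Field K] [CharP K 2] (h : ℕ) (a b a' b' : Fin 3 → K)
    (htr : ∀ i j, Tr h (a i * b j) = if i = j then 1 else 0)
    (htr' : ∀ i j, Tr h (a' i * b' j) = if i = j then 1 else 0)
    (hspan : F2Span a = F2Span a') :
    ∃ M : (Fin 3 → K) ≃ₗ[K] (Fin 3 → K), projMap M '' q8Arc h a b = q8Arc h a' b' := by
  let := ZMod.algebra K 2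
  rw [F2Span_eq_span, F2Span_eq_span, SetLike.coe_set_eq] at hspan
  obtain ⟨G, hG⟩ := exists_matrix_of_forall_mem_span fun i =>
    hspan ▸ Submodule.subset_span (Set.mem_range_self (f := a') i)
  obtain ⟨H, hH⟩ := exists_matrix_of_forall_mem_span fun i =>
    hspan ▸ Submodule.subset_span (Set.mem_range_self (f := a) i)
  have hGH : G * H = 1 := matrix_mul_eq_one_of_linearIndependent
    (linearIndependent_of_dual (τ := trLinear K h) htr') hG hH
  obtain ⟨d, hd⟩ := exists_mulVec_q8Quad_vecMul_eq G
    (isUnit_iff_eq_one.mp (Matrix.isUnit_det_of_right_inverse hGH))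
  have tr_translation := map_mul_linearCombination_of_dual (τ := trLinear K h) htr' (q8Quad d)
  refine ⟨shear (Fintype.linearCombination (ZMod 2) a' d)
    (Fintype.linearCombination (ZMod 2) b' (q8Quad d)), ?_⟩
  rw [q8Arc_eq_traceArc htr, q8Arc_eq_traceArc htr',
    traceArc_eq_of_matrix _ (mul_eq_one_comm.mp hGH) hG hH,
    image_shear_traceArc _ _ _ _ _ _ tr_translation]
  simp only [hd, sub_add_cancel]

/-- Lemma 4.9: two `q/8`-constructions whose defining triples have the
same `F₂`-span give PGL-equivalent point sets. -/
theorem q8_pgl_equiv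
    {K : Type*} [Field K] [Fintype K] (h : ℕ) (hh : 4 ≤ h)
    (hcard : Fintype.card K = 2 ^ h)
    (a b a' b' : Fin 3 → K)
    (hind : F2Indep a) (ha : ∀ i, a i ≠ 0) (hb : ∀ i, b i ≠ 0)
    (htr : ∀ i j, Tr h (a i * b j) = if i = j then 1 else 0)
    (hind' : F2Indep a') (ha' : ∀ i, a' i ≠ 0) (hb' : ∀ i, b' i ≠ 0)
    (htr' : ∀ i j, Tr h (a' i * b' j) = if i = j then 1 else 0)
    (hspan : F2Span a = F2Span a') :
    ∃ M : (Fin 3 → K) ≃ₗ[K] (Fin 3 → K),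
      projMap M '' q8Arc h a b = q8Arc h a' b' := by
  have : CharP K 2 := charP_of_card_eq_prime_pow hcard
  exact q8_pgl_equiv_general h a b a' b' htr htr' hspan
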